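/- arXiv:2205.07427 — 2 statements merged into one kernel-verified Lean document; each statement's English description precedes it below -/
import Mathlib

section
/- Let (Ω, μ) be a measure space, ld : Ω → ℝ a measurable learning-difficulty function, c* ∈ ℝ, and g : Ω → ℝ integrable with ∫_Ω g dμ = 0, satisfying the sign condition: g(x) > 0 whenever ld(x) < c*, g(x) < 0 whenever ld(x) > c*, and g(x) = 0 whenever ld(x) = c*. Let u : ℝ → ℝ be nonnegative and monotone nondecreasing, set w = u ∘ ld, and assume w·g is integrable and μ({x : g(x) ≠ 0 and w(x) ≠ u(c*)}) > 0. Then ∫_Ω w(x)·g(x) dμ(x) < 0; consequently, if the weighted generalization error Err^w : ℝ → ℝ is differentiable, unimodal with minimizer c'^* (strictly decreasing on (-∞, c'^*], strictly increasing on [c'^*, ∞)), and its derivative at c* equals ∫_Ω w(x)·g(x) dμ(x), then c'^* > c*. (Paper's Proposition 5: weighting samples by a nondecreasing, non-constant function of their learning difficulty makes the new optimal model complexity strictly larger than the original optimal complexity c*.) -/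
open MeasureTheory

/-!
Since `g` is nonnegative where `ld < cstar` and nonpositive where `cstar < ld`, replacing the
nondecreasing weight `u ∘ ld` by the constant `u cstar` can only increase the integrand, and the
constant weight integrates to `u cstar * ∫ g = 0`. The weighted error thus has a negative
derivative at `cstar`, so it cannot be nondecreasing on `[cstar, ∞)`.
-/

theorem integral_lt_integral_of_ae_le_of_frequently_ae_lt {Ω : Type*} [MeasurableSpace Ω]
    {μ : Measure Ω} {f g : Ω → ℝ} (hf : Integrable f μ) (hg : Integrable g μ)
    (hle : f ≤ᵐ[μ] g) (hlt : ∃ᵐ x ∂μ, f x < g x) :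
    ∫ x, f x ∂μ < ∫ x, g x ∂μ := by
  refine (integral_mono_ae hf hg hle).lt_of_ne fun hint => hlt ?_
  have heq : f =ᵐ[μ] g := (integral_eq_iff_of_ae_le hf hg hle).1 hint
  exact heq.mono fun x hx => hx.not_lt

theorem mul_le_mul_of_monotone_of_sign_change {L R : Type*} [LinearOrder L] [Ring R]
    [PartialOrder R] [IsOrderedRing R] {u : L → R} (hu : Monotone u) {c t : L} {a : R}
    (hlt : t < c → 0 ≤ a) (hgt : c < t → a ≤ 0) : u t * a ≤ u c * a := by
  rcases lt_trichotomy t c with h | rfl | h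
  · exact mul_le_mul_of_nonneg_right (hu h.le) (hlt h)
  · exact le_rfl
  · exact mul_le_mul_of_nonpos_right (hu h.le) (hgt h)

theorem integral_monotone_comp_mul_lt_of_sign_change {Ω L : Type*} [MeasurableSpace Ω]
    [LinearOrder L] {μ : Measure Ω} {ℓ : Ω → L} {c : L} {g : Ω → ℝ} {u : L → ℝ}
    (hu : Monotone u) (hg : Integrable g μ) (hug : Integrable (fun x => u (ℓ x) * g x) μ)
    (hlt : ∀ᵐ x ∂μ, ℓ x < c → 0 ≤ g x) (hgt : ∀ᵐ x ∂μ, c < ℓ x → g x ≤ 0)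
    (hne : ∃ᵐ x ∂μ, g x ≠ 0 ∧ u (ℓ x) ≠ u c) :
    ∫ x, u (ℓ x) * g x ∂μ < u c * ∫ x, g x ∂μ := by
  have hle : ∀ᵐ x ∂μ, u (ℓ x) * g x ≤ u c * g x := by
    filter_upwards [hlt, hgt] with x hxlt hxgt
    exact mul_le_mul_of_monotone_of_sign_change hu hxlt hxgt
  have hstrict : ∃ᵐ x ∂μ, u (ℓ x) * g x < u c * g x :=
    (hne.and_eventually hle).mono fun x ⟨⟨hgx, hux⟩, hx⟩ =>
      hx.lt_of_ne fun h => hux (mul_right_cancel₀ hgx h)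
  rw [← integral_const_mul]
  exact integral_lt_integral_of_ae_le_of_frequently_ae_lt hug (hg.const_mul (u c)) hle hstrict

theorem lt_of_deriv_neg_of_monotoneOn_Ici {f : ℝ → ℝ} {a b : ℝ} (hderiv : deriv f a < 0)
    (hmono : MonotoneOn f (Set.Ici b)) : a < b := by
  by_contra! hba
  have hnonneg : 0 ≤ derivWithin f (Set.Ici a) a :=
    (hmono.mono (Set.Ici_subset_Ici.2 hba)).derivWithin_nonneg
  rw [(differentiableAt_of_deriv_ne_zero hderiv.ne).derivWithin (uniqueDiffWithinAt_Ici a)]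
    at hnonneg
  exact hderiv.not_ge hnonneg

theorem prop5_nondecreasing_weighting_general {Ω : Type*} [MeasurableSpace Ω] {μ : Measure Ω}
    {ld : Ω → ℝ} {cstar : ℝ} {g : Ω → ℝ} (hg : Integrable g μ) (hg0 : ∫ x, g x ∂μ = 0)
    (hnonneg : ∀ᵐ x ∂μ, ld x < cstar → 0 ≤ g x) (hnonpos : ∀ᵐ x ∂μ, cstar < ld x → g x ≤ 0)
    {u : ℝ → ℝ} (hu : Monotone u) (hug : Integrable (fun x => u (ld x) * g x) μ)
    (hne : 0 < μ {x | g x ≠ 0 ∧ u (ld x) ≠ u cstar}) :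
    ∫ x, u (ld x) * g x ∂μ < 0 ∧
      ∀ (Errw : ℝ → ℝ) (c' : ℝ), MonotoneOn Errw (Set.Ici c') →
        deriv Errw cstar = ∫ x, u (ld x) * g x ∂μ → cstar < c' := by
  have hneg : ∫ x, u (ld x) * g x ∂μ < 0 := by
    simpa only [hg0, mul_zero] using
      integral_monotone_comp_mul_lt_of_sign_change hu hg hug hnonneg hnonpos
        (frequently_ae_iff.2 hne.ne')
  exact ⟨hneg, fun _ _ hmono hderiv => lt_of_deriv_neg_of_monotoneOn_Ici (hderiv ▸ hneg) hmono⟩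

/-- Paper's Proposition 5: weighting samples by a nonnegative nondecreasing, non-constant
(in the stated sense) function `u` of their learning difficulty `ld` makes the derivative
of the weighted generalization error at `cstar` strictly negative, hence the new optimal
model complexity strictly larger than `cstar`. -/
theorem prop5_nondecreasing_weighting
    {Ω : Type*} [MeasurableSpace Ω] (μ : Measure Ω)
    (ld : Ω → ℝ) (hld : Measurable ld) (cstar : ℝ)
    (g : Ω → ℝ) (hg : Integrable g μ) (hg0 : ∫ x, g x ∂μ = 0)
    (hpos : ∀ x, ld x < cstar → 0 < g x)
    (hneg : ∀ x, cstar < ld x → g x < 0)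
    (hzero : ∀ x, ld x = cstar → g x = 0)
    (u : ℝ → ℝ) (hunn : ∀ t, 0 ≤ u t) (humono : Monotone u)
    (w : Ω → ℝ) (hw : ∀ x, w x = u (ld x))
    (hwg : Integrable (fun x => w x * g x) μ)
    (hnd : 0 < μ {x | g x ≠ 0 ∧ w x ≠ u cstar}) :
    ∫ x, w x * g x ∂μ < 0 ∧
      (∀ (Errw : ℝ → ℝ) (c' : ℝ), Differentiable ℝ Errw →
        StrictAntiOn Errw (Set.Iic c') → StrictMonoOn Errw (Set.Ici c') →
        deriv Errw cstar = ∫ x, w x * g x ∂μ → c' > cstar) := by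
  obtain rfl : w = fun x => u (ld x) := funext hw
  have ⟨hneg, hlt⟩ := prop5_nondecreasing_weighting_general hg hg0
    (.of_forall fun x hx => (hpos x hx).le) (.of_forall fun x hx => (hneg x hx).le) humono hwg hnd
  exact ⟨hneg, fun Errw c' _ _ hmono => hlt Errw c' hmono.monotoneOn⟩
end

section
/- Let (Ω, μ) be a measure space, c* > 0, and let 0 < τ_e < 1 < τ_h. Let ld : Ω → ℝ be measurable and partition Ω into the easy region Ω^e = {x : ld(x) ≤ τ_e·c*}, the medium region Ω^m = {x : τ_e·c* < ld(x) ≤ τ_h·c*}, and the hard region Ω^h = {x : ld(x) > τ_h·c*}, with μ(Ω^e) > 0 and μ(Ω^h) > 0. Let g : Ω → ℝ be integrable with ∫_Ω g dμ = 0 and satisfying: g(x) > 0 whenever ld(x) < c*, g(x) < 0 whenever ld(x) > c*, and g(x) = 0 whenever ld(x) = c*. Let w take the constant nonnegative value ω_e on Ω^e, ω_m on Ω^m, and ω_h on Ω^h, with ω_e ≤ ω_m ≤ ω_h and ω_e < ω_h, and assume w·g is integrable. Then ∫_Ω w(x)·g(x) dμ(x) < 0; consequently, if the weighted generalization error Err^w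 : ℝ → ℝ is differentiable, unimodal with minimizer c'^*, and its derivative at c* equals ∫_Ω w(x)·g(x) dμ(x), then c'^* > c*. (Paper's Corollary 2: region weights nondecreasing from easy to hard samples, with strictly larger weight on hard than on easy, make the new optimal model complexity strictly larger.) -/
open MeasureTheory

/-!
Since `∫ g = 0`, subtracting the constant `ωm` from the weight does not change `∫ w * g`. The
shifted weight `w - ωm` vanishes on the medium region and elsewhere has sign opposite to `g`, so
the integrand is nonpositive; because `ωe < ωh`, it is nonzero on the whole easy region or on the
whole hard region. Finally, a function with negative derivative at `c` cannot be increasing to the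
right of a point `m ≤ c`.
-/

section WeightedIntegral

variable {Ω : Type*} [MeasurableSpace Ω] {μ : Measure Ω} {w g : Ω → ℝ}

theorem integral_sub_const_mul_of_integral_eq_zero (k : ℝ) (hg : Integrable g μ)
    (hg0 : ∫ x, g x ∂μ = 0) (hwg : Integrable (fun x => w x * g x) μ) :
    ∫ x, (w x - k) * g x ∂μ = ∫ x, w x * g x ∂μ := by
  simp only [sub_mul]
  rw [integral_sub hwg (hg.const_mul k), integral_const_mul, hg0, mul_zero, sub_zero]

theorem integral_lt_zero_of_ae_nonpos_of_support_pos {f : Ω → ℝ} (hf : Integrable f μ)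
    (hf_nonpos : f ≤ᵐ[μ] 0) (hf_support : 0 < μ (Function.support f)) :
    ∫ x, f x ∂μ < 0 := by
  have hneg_nonneg : 0 ≤ᵐ[μ] -f := hf_nonpos.mono fun _ hx => neg_nonneg.2 hx
  have hneg_pos : 0 < ∫ x, (-f) x ∂μ := by
    rwa [integral_pos_iff_support_of_nonneg_ae hneg_nonneg hf.neg, Function.support_neg]
  rwa [integral_neg', neg_pos] at hneg_pos

theorem integral_mul_lt_zero_of_sub_const_mul_nonpos (k : ℝ) (hg : Integrable g μ)
    (hg0 : ∫ x, g x ∂μ = 0) (hwg : Integrable (fun x => w x * g x) μ)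
    (hnonpos : ∀ᵐ x ∂μ, (w x - k) * g x ≤ 0)
    (hsupport : 0 < μ (Function.support fun x => (w x - k) * g x)) :
    ∫ x, w x * g x ∂μ < 0 := by
  have hint : Integrable (fun x => (w x - k) * g x) μ := by
    simp only [sub_mul]
    exact hwg.sub (hg.const_mul k)
  rw [← integral_sub_const_mul_of_integral_eq_zero k hg hg0 hwg]
  exact integral_lt_zero_of_ae_nonpos_of_support_pos hint hnonpos hsupport

end WeightedIntegral

theorem lt_of_hasDerivAt_neg_of_monotoneOn_Ici {f : ℝ → ℝ} {f' c m : ℝ}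
    (hf : HasDerivAt f f' c) (hf' : f' < 0) (hmono : MonotoneOn f (Set.Ici m)) : c < m := by
  by_contra! hmc
  have hnonneg : 0 ≤ derivWithin f (Set.Ici m) c := hmono.derivWithin_nonneg
  rw [hf.hasDerivWithinAt.derivWithin (uniqueDiffOn_Ici m c hmc)] at hnonneg
  exact hf'.not_ge hnonneg

theorem cor2_region_weights_increasing_general {Ω : Type*} [MeasurableSpace Ω] {μ : Measure Ω}
    {E H : Set Ω} (hE : 0 < μ E) (hH : 0 < μ H)
    {g : Ω → ℝ} (hg : Integrable g μ) (hg0 : ∫ x, g x ∂μ = 0)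
    (hpos : ∀ x ∈ E, 0 < g x) (hneg : ∀ x ∈ H, g x < 0)
    {ωe ωm ωh : ℝ} (hem : ωe ≤ ωm) (hmh : ωm ≤ ωh) (heh : ωe < ωh)
    {w : Ω → ℝ} (hwe : ∀ x ∈ E, w x ≤ ωe) (hwm : ∀ x, x ∉ E → x ∉ H → w x = ωm)
    (hwh : ∀ x ∈ H, ωh ≤ w x) (hwg : Integrable (fun x => w x * g x) μ) :
    ∫ x, w x * g x ∂μ < 0 ∧
      ∀ (Errw : ℝ → ℝ) (c c' : ℝ), MonotoneOn Errw (Set.Ici c') →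
        HasDerivAt Errw (∫ x, w x * g x ∂μ) c → c < c' := by
  have hnonpos (x : Ω) : (w x - ωm) * g x ≤ 0 := by
    by_cases hxE : x ∈ E
    · exact mul_nonpos_of_nonpos_of_nonneg
        (sub_nonpos.2 ((hwe x hxE).trans hem)) (hpos x hxE).le
    by_cases hxH : x ∈ H
    · exact mul_nonpos_of_nonneg_of_nonpos
        (sub_nonneg.2 (hmh.trans (hwh x hxH))) (hneg x hxH).le
    · rw [hwm x hxE hxH, sub_self, zero_mul]
  have hsupport : 0 < μ (Function.support fun x => (w x - ωm) * g x) := by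
    rcases heh.gt_or_lt ωm with hlt | hlt
    · refine hE.trans_le (measure_mono fun x hx => ?_)
      exact (mul_neg_of_neg_of_pos (sub_neg.2 ((hwe x hx).trans_lt hlt)) (hpos x hx)).ne
    · refine hH.trans_le (measure_mono fun x hx => ?_)
      exact (mul_neg_of_pos_of_neg (sub_pos.2 (hlt.trans_le (hwh x hx))) (hneg x hx)).ne
  have hlt : ∫ x, w x * g x ∂μ < 0 :=
    integral_mul_lt_zero_of_sub_const_mul_nonpos ωm hg hg0 hwg (.of_forall hnonpos) hsupport
  exact ⟨hlt, fun _ _ _ hmono hderiv => lt_of_hasDerivAt_neg_of_monotoneOn_Ici hderiv hlt hmono⟩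

/-- Paper's Corollary 2: constant region weights nondecreasing from the easy region
through the medium region to the hard region, strictly larger on hard than on easy,
make the derivative of the weighted error at `cstar` strictly negative, hence the new
optimal model complexity strictly larger than `cstar`. -/
theorem cor2_region_weights_increasing
    {Ω : Type*} [MeasurableSpace Ω] (μ : Measure Ω)
    (cstar : ℝ) (hcstar : 0 < cstar)
    (τe τh : ℝ) (hτe0 : 0 < τe) (hτe1 : τe < 1) (hτh : 1 < τh)
    (ld : Ω → ℝ) (hld : Measurable ld)
    (hμe : 0 < μ {x | ld x ≤ τe * cstar})
    (hμh : 0 < μ {x | τh * cstar < ld x})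
    (g : Ω → ℝ) (hg : Integrable g μ) (hg0 : ∫ x, g x ∂μ = 0)
    (hpos : ∀ x, ld x < cstar → 0 < g x)
    (hneg : ∀ x, cstar < ld x → g x < 0)
    (hzero : ∀ x, ld x = cstar → g x = 0)
    (ωe ωm ωh : ℝ) (hωe : 0 ≤ ωe) (hωm : 0 ≤ ωm) (hωh : 0 ≤ ωh)
    (hem : ωe ≤ ωm) (hmh : ωm ≤ ωh) (heh : ωe < ωh)
    (w : Ω → ℝ)
    (hwe : ∀ x, ld x ≤ τe * cstar → w x = ωe)
    (hwm : ∀ x, τe * cstar < ld x → ld x ≤ τh * cstar → w x = ωm)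
    (hwh : ∀ x, τh * cstar < ld x → w x = ωh)
    (hwg : Integrable (fun x => w x * g x) μ) :
    ∫ x, w x * g x ∂μ < 0 ∧
      (∀ (Errw : ℝ → ℝ) (c' : ℝ), Differentiable ℝ Errw →
        StrictAntiOn Errw (Set.Iic c') → StrictMonoOn Errw (Set.Ici c') →
        deriv Errw cstar = ∫ x, w x * g x ∂μ → c' > cstar) := by
  have heasy : τe * cstar < cstar := mul_lt_of_lt_one_left hcstar hτe1
  have hhard : cstar < τh * cstar := lt_mul_of_one_lt_left hcstar hτh
  obtain ⟨hlt, hopt⟩ := cor2_region_weights_increasing_general hμe hμh hg hg0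
    (fun x hx => hpos x (lt_of_le_of_lt hx heasy)) (fun x hx => hneg x (hhard.trans hx))
    hem hmh heh (fun x hx => (hwe x hx).le)
    (fun x hxe hxh => hwm x (not_le.1 hxe) (not_lt.1 hxh)) (fun x hx => (hwh x hx).ge) hwg
  exact ⟨hlt, fun Errw c' hdiff _ hmono hderiv =>
    hopt Errw cstar c' hmono.monotoneOn (hderiv ▸ (hdiff cstar).hasDerivAt)⟩
end
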